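/- (Koopman principal eigenvalues of components are eigenvalues of the nonlinear cascade.) Assume Condition (★) in full, let τ be a homeomorphism of ℂ^{d_1}×⋯×ℂ^{d_n} and NonLin a map with Lin = τ^{−1} ∘ NonLin ∘ τ. Fix i ∈ {1,…,n} and s_i ∈ {1,…,d_i}, and define φ : ℂ^{d_1}×⋯×ℂ^{d_n} → ℂ by φ(y) = ψ_{i,s_i}(pert_i(Π_1 τ^{−1}(y),…,Π_i τ^{−1}(y))). Then φ(NonLin(y)) = λ_{i,s_i} · φ(y) for all y; i.e., ψ_{(0,…,0,s_i,0,…,0)} ∘ pert ∘ τ^{−1} is an eigenfunction of the Koopman operator of the nonlinear cascade NonLin at eigenvalue λ_{i,s_i}. -/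

import Mathlib

/-!
The coordinates `pert_i` diagonalize the cascade blockwise: `pert_i (Lin x) = L_i (pert_i x)`
(`pert_LinStep`). This rests on two facts.

* The entrywise division in the definition of `D_{i+1,j}`, carried out in the eigenbases `V_{i+1}`
  and `V_j`, solves the Sylvester equation `L_{i+1} D_{i+1,j} - D_{i+1,j} L_j = C_i D_{i,j}`
  (`Dmat_sylvester`); disjointness of the spectra makes the divisors nonzero.
* The definition of `pert` inverts to `x_i = ∑_{j ≤ i} (-1)^{i-j} D_{i,j} pert_j x`
  (`sum_Dmat_pert`).

By induction, moving each `L_j` across `D_{i+1,j}` costs `- C_i D_{i,j}`, and by the second fact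
these errors sum to `- C_i x_i`, which cancels the coupling term of the cascade. Finally the rows of
`V_i⁻¹` are left eigenvectors of `L_i`, and the conjugacy `τ` transports the resulting
eigenfunction to `NonLin`.
-/

open Matrix Finset Filter Topology

noncomputable section

/-- A matrix acting as a continuous linear map between Euclidean spaces. -/
def matCLM {p q : ℕ} (M : Matrix (Fin p) (Fin q) ℂ) :
    EuclideanSpace ℂ (Fin q) →L[ℂ] EuclideanSpace ℂ (Fin p) :=
  LinearMap.toContinuousLinearMap (Matrix.toEuclideanLin M)

/-- Operator norm of a matrix induced by the Euclidean norms. -/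
def opN {p q : ℕ} (M : Matrix (Fin p) (Fin q) ℂ) : ℝ := ‖matCLM M‖

/-- One step of the chained linear cascade (levels indexed from `0`). -/
def LinStep {d : ℕ → ℕ} (L : ∀ i, Matrix (Fin (d i)) (Fin (d i)) ℂ)
    (C : ∀ i, Matrix (Fin (d (i+1))) (Fin (d i)) ℂ)
    (x : ∀ i, EuclideanSpace ℂ (Fin (d i))) (i : ℕ) :
    EuclideanSpace ℂ (Fin (d i)) :=
  match i with
  | 0 => matCLM (L 0) (x 0)
  | (i+1) => matCLM (L (i+1)) (x (i+1)) + matCLM (C i) (x i)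

/-- The matrices `D_{i,j}` of the paper (levels indexed from `0`). -/
def Dmat {d : ℕ → ℕ} (L : ∀ i, Matrix (Fin (d i)) (Fin (d i)) ℂ)
    (C : ∀ i, Matrix (Fin (d (i+1))) (Fin (d i)) ℂ)
    (V : ∀ i, Matrix (Fin (d i)) (Fin (d i)) ℂ)
    (ev : ∀ i, Fin (d i) → ℂ) : ∀ i j : ℕ, Matrix (Fin (d i)) (Fin (d j)) ℂ
  | 0, 0 => 1
  | 0, _ + 1 => 0
  | i + 1, j =>
    if h : j = i + 1 then by subst h; exact 1
    else
      (L (i+1))⁻¹ * V (i+1) *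
        Matrix.of (fun ℓ m =>
          ((V (i+1))⁻¹ * C i * Dmat L C V ev i j * V j) ℓ m
            * (1 - ev j m / ev (i+1) ℓ)⁻¹) * (V j)⁻¹

/-- The perturbation maps `pert_i` of the paper (levels indexed from `0`). -/
def pert {d : ℕ → ℕ} (L : ∀ i, Matrix (Fin (d i)) (Fin (d i)) ℂ)
    (C : ∀ i, Matrix (Fin (d (i+1))) (Fin (d i)) ℂ)
    (V : ∀ i, Matrix (Fin (d i)) (Fin (d i)) ℂ)
    (ev : ∀ i, Fin (d i) → ℂ)
    (x : ∀ k, EuclideanSpace ℂ (Fin (d k))) : ∀ i : ℕ, EuclideanSpace ℂ (Fin (d i))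
  | 0 => x 0
  | i + 1 => x (i+1) + ∑ j ∈ (Finset.range (i+1)).attach,
      ((-1 : ℂ) ^ (i - j.1)) • matCLM (Dmat L C V ev (i+1) j.1) (pert L C V ev x j.1)
  termination_by i => i
  decreasing_by exact Finset.mem_range.mp j.2

/-- The `s`-th principal eigenfunction of component system `i`. -/
def psi {d : ℕ → ℕ} (V : ∀ i, Matrix (Fin (d i)) (Fin (d i)) ℂ) (i : ℕ) (s : Fin (d i)) :
    EuclideanSpace ℂ (Fin (d i)) →L[ℂ] ℂ :=
  (EuclideanSpace.proj s).comp (matCLM (V i)⁻¹)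

lemma matCLM_mul_apply {p q r : ℕ} (M : Matrix (Fin p) (Fin q) ℂ) (N : Matrix (Fin q) (Fin r) ℂ)
    (x : EuclideanSpace ℂ (Fin r)) : matCLM (M * N) x = matCLM M (matCLM N x) := by
  ext k
  simp [matCLM, Matrix.toLpLin_apply, Matrix.mulVec_mulVec]

lemma matCLM_one_apply {p : ℕ} (x : EuclideanSpace ℂ (Fin p)) :
    matCLM (1 : Matrix (Fin p) (Fin p) ℂ) x = x := by
  ext k
  simp [matCLM]

lemma matCLM_sub_apply {p q : ℕ} (M N : Matrix (Fin p) (Fin q) ℂ)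
    (x : EuclideanSpace ℂ (Fin q)) : matCLM (M - N) x = matCLM M x - matCLM N x := by
  simp [matCLM]

section Cascade

variable {d : ℕ → ℕ} (L : ∀ i, Matrix (Fin (d i)) (Fin (d i)) ℂ)
    (C : ∀ i, Matrix (Fin (d (i+1))) (Fin (d i)) ℂ)
    (V : ∀ i, Matrix (Fin (d i)) (Fin (d i)) ℂ)
    (ev : ∀ i, Fin (d i) → ℂ)

lemma Dmat_self (i : ℕ) : Dmat L C V ev i i = 1 := by
  cases i <;> simp [Dmat]

lemma pert_succ (x : ∀ k, EuclideanSpace ℂ (Fin (d k))) (i : ℕ) :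
    pert L C V ev x (i+1) = x (i+1) + ∑ j ∈ Finset.range (i+1),
      ((-1 : ℂ) ^ (i - j)) • matCLM (Dmat L C V ev (i+1) j) (pert L C V ev x j) := by
  rw [pert, Finset.sum_attach (Finset.range (i+1)) (fun j =>
    ((-1 : ℂ) ^ (i - j)) • matCLM (Dmat L C V ev (i+1) j) (pert L C V ev x j))]

/-- The original coordinates recovered from the perturbed ones. -/
lemma sum_Dmat_pert (x : ∀ k, EuclideanSpace ℂ (Fin (d k))) (i : ℕ) :
    ∑ j ∈ Finset.range (i+1),
      ((-1 : ℂ) ^ (i - j)) • matCLM (Dmat L C V ev i j) (pert L C V ev x j) = x i := by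
  rw [Finset.sum_range_succ, Dmat_self, matCLM_one_apply]
  cases i with
  | zero => simp [pert]
  | succ i =>
    have h : ∀ j ∈ Finset.range (i+1),
        ((-1 : ℂ) ^ (i + 1 - j)) • matCLM (Dmat L C V ev (i+1) j) (pert L C V ev x j)
        = -(((-1 : ℂ) ^ (i - j)) • matCLM (Dmat L C V ev (i+1) j) (pert L C V ev x j)) := by
      intro j hj
      rw [Nat.succ_sub (Nat.lt_succ_iff.mp (Finset.mem_range.mp hj)), pow_succ, mul_neg_one,
        neg_smul]
    rw [Finset.sum_congr rfl h, Finset.sum_neg_distrib, pert_succ]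
    simp

variable {L V ev}

/-- Invertibility of `L i` forces its eigenvalues to be nonzero. -/
lemma ev_ne_zero (hdiag : ∀ i, L i = V i * Matrix.diagonal (ev i) * (V i)⁻¹)
    (hLu : ∀ i, IsUnit (L i)) (i : ℕ) (s : Fin (d i)) : ev i s ≠ 0 := by
  intro h
  have h1 := (Matrix.isUnit_iff_isUnit_det _).mp (hLu i)
  rw [hdiag i, Matrix.det_mul, Matrix.det_mul, Matrix.det_diagonal,
    Finset.prod_eq_zero (Finset.mem_univ s) h] at h1
  simp at h1

/-- The rows of `(V i)⁻¹` are left eigenvectors of `L i`. -/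
lemma inv_mul_L (hdiag : ∀ i, L i = V i * Matrix.diagonal (ev i) * (V i)⁻¹)
    (hV : ∀ i, IsUnit (V i)) (i : ℕ) :
    (V i)⁻¹ * L i = Matrix.diagonal (ev i) * (V i)⁻¹ := by
  rw [hdiag i, ← Matrix.mul_assoc, ← Matrix.mul_assoc,
    Matrix.nonsing_inv_mul _ ((Matrix.isUnit_iff_isUnit_det _).mp (hV i)), Matrix.one_mul]

/-- `D_{i+1,j}` solves a Sylvester equation whose right-hand side is the coupled `D_{i,j}`. -/
lemma Dmat_sylvester (hdiag : ∀ i, L i = V i * Matrix.diagonal (ev i) * (V i)⁻¹)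
    (hV : ∀ i, IsUnit (V i)) (hLu : ∀ i, IsUnit (L i))
    (hsp : ∀ i j : ℕ, i ≠ j → ∀ ℓ m, ev i ℓ ≠ ev j m) (i j : ℕ) (hj : j ≠ i + 1) :
    Dmat L C V ev (i+1) j * L j = L (i+1) * Dmat L C V ev (i+1) j - C i * Dmat L C V ev i j := by
  have hVd : ∀ k, IsUnit (V k).det := fun k => (Matrix.isUnit_iff_isUnit_det _).mp (hV k)
  have hLd := (Matrix.isUnit_iff_isUnit_det _).mp (hLu (i+1))
  set A := (V (i+1))⁻¹ * C i * Dmat L C V ev i j * V j with hA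
  set Ct : Matrix (Fin (d (i+1))) (Fin (d j)) ℂ :=
    Matrix.of (fun ℓ m => A ℓ m * (1 - ev j m / ev (i+1) ℓ)⁻¹) with hCt
  have hD : Dmat L C V ev (i+1) j = (L (i+1))⁻¹ * V (i+1) * Ct * (V j)⁻¹ := by
    rw [Dmat, dif_neg hj]
  -- In the eigenbases the equation holds entrywise.
  have hent : Ct * Matrix.diagonal (ev j)
      = Matrix.diagonal (ev (i+1)) * (Ct - A) := by
    ext ℓ m
    have h0 := ev_ne_zero hdiag hLu (i+1) ℓ
    have h1 : ev (i+1) ℓ - ev j m ≠ 0 := sub_ne_zero.mpr (hsp _ _ (Ne.symm hj) ℓ m)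
    have h2 : 1 - ev j m / ev (i+1) ℓ = (ev (i+1) ℓ - ev j m) / ev (i+1) ℓ := by
      field_simp
    simp only [Matrix.mul_diagonal, Matrix.diagonal_mul, Matrix.sub_apply, hCt, Matrix.of_apply, h2]
    field_simp
    ring
  have hVΛ : V (i+1) * Matrix.diagonal (ev (i+1)) = L (i+1) * V (i+1) := by
    rw [hdiag (i+1), Matrix.mul_assoc _ _ (V (i+1)), Matrix.nonsing_inv_mul _ (hVd _),
      Matrix.mul_one]
  have hVA : V (i+1) * A * (V j)⁻¹ = C i * Dmat L C V ev i j := by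
    simp only [hA, ← Matrix.mul_assoc]
    rw [Matrix.mul_nonsing_inv _ (hVd _), Matrix.one_mul,
      Matrix.mul_nonsing_inv_cancel_right _ _ (hVd _)]
  calc Dmat L C V ev (i+1) j * L j
      = (L (i+1))⁻¹ * V (i+1) * (Ct * Matrix.diagonal (ev j)) * (V j)⁻¹ := by
        rw [hD, Matrix.mul_assoc _ _ (L j), inv_mul_L hdiag hV]
        simp only [Matrix.mul_assoc]
    _ = (L (i+1))⁻¹ * (V (i+1) * Matrix.diagonal (ev (i+1))) * (Ct - A) * (V j)⁻¹ := by
        rw [hent]; simp only [Matrix.mul_assoc]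
    _ = V (i+1) * (Ct - A) * (V j)⁻¹ := by
        rw [hVΛ, Matrix.nonsing_inv_mul_cancel_left _ _ hLd]
    _ = L (i+1) * Dmat L C V ev (i+1) j - C i * Dmat L C V ev i j := by
        rw [← hVA, hD, Matrix.mul_sub, Matrix.sub_mul, Matrix.mul_assoc (L (i+1))⁻¹,
          Matrix.mul_assoc (L (i+1))⁻¹, Matrix.mul_nonsing_inv_cancel_left _ _ hLd]

/-- The perturbation maps conjugate the cascade to the block-diagonal system with blocks `L i`. -/
lemma pert_LinStep (hdiag : ∀ i, L i = V i * Matrix.diagonal (ev i) * (V i)⁻¹)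
    (hV : ∀ i, IsUnit (V i)) (hLu : ∀ i, IsUnit (L i))
    (hsp : ∀ i j : ℕ, i ≠ j → ∀ ℓ m, ev i ℓ ≠ ev j m)
    (x : ∀ k, EuclideanSpace ℂ (Fin (d k))) (i : ℕ) :
    pert L C V ev (LinStep L C x) i = matCLM (L i) (pert L C V ev x i) := by
  induction i using Nat.strong_induction_on with
  | _ i ih =>
    cases i with
    | zero => simp [pert, LinStep]
    | succ i =>
      have h : ∀ j ∈ Finset.range (i+1),
          ((-1 : ℂ) ^ (i - j)) • matCLM (Dmat L C V ev (i+1) j) (pert L C V ev (LinStep L C x) j)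
          = matCLM (L (i+1))
              (((-1 : ℂ) ^ (i - j)) • matCLM (Dmat L C V ev (i+1) j) (pert L C V ev x j))
            - matCLM (C i)
              (((-1 : ℂ) ^ (i - j)) • matCLM (Dmat L C V ev i j) (pert L C V ev x j)) := by
        intro j hj
        have hj' := Finset.mem_range.mp hj
        rw [ih j hj', ← matCLM_mul_apply, Dmat_sylvester C hdiag hV hLu hsp i j hj'.ne,
          matCLM_sub_apply, matCLM_mul_apply, matCLM_mul_apply, smul_sub, map_smul, map_smul]
      rw [pert_succ, Finset.sum_congr rfl h, Finset.sum_sub_distrib, ← map_sum, ← map_sum,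
        sum_Dmat_pert, pert_succ, map_add]
      simp only [LinStep]
      abel

/-- The functional `psi V i s` is an eigenvector of the transpose of `L i`. -/
lemma psi_matCLM (hdiag : ∀ i, L i = V i * Matrix.diagonal (ev i) * (V i)⁻¹)
    (hV : ∀ i, IsUnit (V i)) (i : ℕ) (s : Fin (d i)) (z : EuclideanSpace ℂ (Fin (d i))) :
    psi V i s (matCLM (L i) z) = ev i s * psi V i s z := by
  simp only [psi, ContinuousLinearMap.comp_apply]
  rw [← matCLM_mul_apply, inv_mul_L hdiag hV, matCLM_mul_apply]
  simp [matCLM, Matrix.toLpLin_apply, -Matrix.mulVec_mulVec, Matrix.mulVec_diagonal]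

end Cascade

/-- Koopman principal eigenvalues of component systems are eigenvalues of the
nonlinear cascade, Condition (★) in full. Let `τ` be a homeomorphism of the state space and
`NonLin` a map with `Lin = τ⁻¹ ∘ NonLin ∘ τ`. For fixed level `i` (levels indexed from `0`)
and `s`, the observable `φ(y) = ψ_{i,s}(pert_i(τ⁻¹(y)))` satisfies
`φ(NonLin(y)) = λ_{i,s} φ(y)`, i.e. `ψ_{(0,…,0,s,0,…,0)} ∘ pert ∘ τ⁻¹` is an eigenfunction of
the Koopman operator of `NonLin` at eigenvalue `λ_{i,s}`. -/
theorem stmt15 {d : ℕ → ℕ} (L : ∀ i, Matrix (Fin (d i)) (Fin (d i)) ℂ)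
    (C : ∀ i, Matrix (Fin (d (i+1))) (Fin (d i)) ℂ)
    (V : ∀ i, Matrix (Fin (d i)) (Fin (d i)) ℂ)
    (ev : ∀ i, Fin (d i) → ℂ)
    (hdiag : ∀ i, L i = V i * Matrix.diagonal (ev i) * (V i)⁻¹)
    (hV : ∀ i, IsUnit (V i))
    (hLu : ∀ i, IsUnit (L i))
    (hsp : ∀ i j : ℕ, i ≠ j → ∀ ℓ m, ev i ℓ ≠ ev j m)
    (hmono : ∀ i, opN (L i) < opN (L (i+1)))
    (hone : ∀ i, opN (L i) ≤ 1)
    (τ : (∀ i, EuclideanSpace ℂ (Fin (d i))) ≃ₜ (∀ i, EuclideanSpace ℂ (Fin (d i))))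
    (NonLin : (∀ i, EuclideanSpace ℂ (Fin (d i))) → ∀ i, EuclideanSpace ℂ (Fin (d i)))
    (hconj : ∀ x, LinStep L C x = τ.symm (NonLin (τ x)))
    (i : ℕ) (s : Fin (d i)) (y : ∀ k, EuclideanSpace ℂ (Fin (d k))) :
    psi V i s (pert L C V ev (τ.symm (NonLin y)) i)
      = ev i s * psi V i s (pert L C V ev (τ.symm y) i) := by
  have h : τ.symm (NonLin y) = LinStep L C (τ.symm y) := by
    rw [hconj, Homeomorph.apply_symm_apply]
  rw [h, pert_LinStep C hdiag hV hLu hsp, psi_matCLM hdiag hV]
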